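/- Let G be a finite abstract simplicial complex. Then for every simplex x and every simplex y ≠ x, Σ_{z : z∩x ≠ ∅} ω(z) χ(St(z) ∩ St(y)) = 0, and Σ_{z : z∩x ≠ ∅} ω(z) χ(St(z) ∩ St(x)) = ω(x). -/

import Mathlib

/-!
Exchange the two summations: `ω(w)` is then weighted by the sum of `ω(z)` over the faces `z` of `w`
meeting `x`. Since the sum of `(-1)^|z|` over all subsets `z` of a nonempty `w` vanishes, this
weight equals the sum of `(-1)^|z|` over the subsets of `w \ x`, which is `1` if `w ⊆ x` and `0`
otherwise. What survives is the sum of `ω` over the Boolean interval `[y, x]`, which vanishes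
unless `y = x`.
-/

section

open Finset

variable {V R : Type*} [DecidableEq V] [Ring R]

theorem alternating_sum_powerset (s : Finset V) :
    ∑ t ∈ s.powerset, (-1 : R) ^ #t = if s = ∅ then 1 else 0 := by
  exact_mod_cast congrArg (Int.cast : ℤ → R) (sum_powerset_neg_one_pow_card (x := s))

theorem alternating_sum_powerset_inter_nonempty {w : Finset V} (hw : w.Nonempty) (x : Finset V) :
    ∑ z ∈ w.powerset with (z ∩ x).Nonempty, (-1 : R) ^ (#z + 1) = if w ⊆ x then 1 else 0 := by
  have filter_not_inter_nonempty : {z ∈ w.powerset | ¬ (z ∩ x).Nonempty} = (w \ x).powerset := by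
    ext z
    simp [subset_sdiff, disjoint_iff_inter_eq_empty]
  have sum_add_sum_eq_zero : ∑ z ∈ w.powerset with (z ∩ x).Nonempty, (-1 : R) ^ #z +
      ∑ z ∈ (w \ x).powerset, (-1 : R) ^ #z = 0 := by
    rw [← filter_not_inter_nonempty, sum_filter_add_sum_filter_not, alternating_sum_powerset,
      if_neg hw.ne_empty]
  calc ∑ z ∈ w.powerset with (z ∩ x).Nonempty, (-1 : R) ^ (#z + 1)
      = -∑ z ∈ w.powerset with (z ∩ x).Nonempty, (-1 : R) ^ #z := by
        simp only [pow_succ, mul_neg_one, sum_neg_distrib]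
    _ = ∑ z ∈ (w \ x).powerset, (-1 : R) ^ #z := neg_eq_of_add_eq_zero_right sum_add_sum_eq_zero
    _ = if w ⊆ x then 1 else 0 := by
        simp only [alternating_sum_powerset, sdiff_eq_empty_iff_subset]

theorem alternating_sum_Icc (y x : Finset V) :
    ∑ w ∈ Icc y x, (-1 : R) ^ (#w + 1) = if x = y then (-1) ^ (#x + 1) else 0 := by
  by_cases hyx : y ⊆ x
  · have disjoint_of_mem {t : Finset V} (ht : t ∈ (x \ y).powerset) : Disjoint y t :=
      disjoint_sdiff.mono_right (mem_powerset.1 ht)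
    have union_injOn : Set.InjOn (y ∪ ·) ((x \ y).powerset : Set (Finset V)) :=
      fun s hs t ht hst => by
        rw [← union_sdiff_cancel_left (disjoint_of_mem hs),
          ← union_sdiff_cancel_left (disjoint_of_mem ht)]
        exact congrArg (· \ y) hst
    calc ∑ w ∈ Icc y x, (-1 : R) ^ (#w + 1)
        = ∑ t ∈ (x \ y).powerset, (-1 : R) ^ (#(y ∪ t) + 1) := by
          rw [Icc_eq_image_powerset hyx, sum_image union_injOn]
      _ = ∑ t ∈ (x \ y).powerset, (-1 : R) ^ (#y + 1) * (-1) ^ #t :=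
          sum_congr rfl fun t ht => by
            rw [card_union_of_disjoint (disjoint_of_mem ht), add_right_comm, pow_add]
      _ = (-1) ^ (#y + 1) * if x = y then 1 else 0 := by
          simp only [← mul_sum, alternating_sum_powerset, sdiff_eq_empty_iff_subset,
            hyx.ge_iff_eq.trans eq_comm]
      _ = if x = y then (-1) ^ (#x + 1) else 0 := by
          split_ifs with hxy <;> simp [hxy]
  · rw [Icc_eq_empty hyx, sum_empty, if_neg fun h => hyx h.ge]

theorem sum_inter_nonempty_mul_sum_superset {G A : Finset (Finset V)}
    (hclosed : ∀ w ∈ G, ∀ z ⊆ w, z.Nonempty → z ∈ G) (hAG : A ⊆ G)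
    (hA : ∀ w ∈ A, w.Nonempty) (x : Finset V) (f : Finset V → R) :
    ∑ z ∈ G with (z ∩ x).Nonempty, (-1 : R) ^ (#z + 1) * ∑ w ∈ A with z ⊆ w, f w
      = ∑ w ∈ A with w ⊆ x, f w := by
  have mem_exchange (z w : Finset V) :
      z ∈ {z ∈ G | (z ∩ x).Nonempty} ∧ w ∈ {w ∈ A | z ⊆ w} ↔
        z ∈ {z ∈ w.powerset | (z ∩ x).Nonempty} ∧ w ∈ A := by
    simp only [mem_filter, mem_powerset]
    constructor
    · rintro ⟨⟨-, hzx⟩, hw, hzw⟩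
      exact ⟨⟨hzw, hzx⟩, hw⟩
    · rintro ⟨⟨hzw, hzx⟩, hw⟩
      exact ⟨⟨hclosed w (hAG hw) z hzw (hzx.mono inter_subset_left), hzx⟩, hw, hzw⟩
  calc ∑ z ∈ G with (z ∩ x).Nonempty, (-1 : R) ^ (#z + 1) * ∑ w ∈ A with z ⊆ w, f w
      = ∑ w ∈ A, ∑ z ∈ w.powerset with (z ∩ x).Nonempty, (-1 : R) ^ (#z + 1) * f w := by
        simp only [mul_sum]
        exact sum_comm' mem_exchange
    _ = ∑ w ∈ A, if w ⊆ x then f w else 0 := sum_congr rfl fun w hw => by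
        rw [← sum_mul, alternating_sum_powerset_inter_nonempty (hA w hw), ite_mul, one_mul,
          zero_mul]
    _ = ∑ w ∈ A with w ⊆ x, f w := (sum_filter _ _).symm

theorem green_gauss_bonnet_general {G : Finset (Finset V)}
    (hclosed : ∀ x ∈ G, ∀ y ⊆ x, y.Nonempty → y ∈ G)
    {x y : Finset V} (hx : x ∈ G) (hy : y.Nonempty) :
    ∑ z ∈ G with (z ∩ x).Nonempty,
        (-1 : R) ^ (#z + 1) * ∑ w ∈ G with z ⊆ w ∧ y ⊆ w, (-1 : R) ^ (#w + 1)
      = if x = y then (-1) ^ (#x + 1) else 0 := by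
  have star_nonempty : ∀ w ∈ {w ∈ G | y ⊆ w}, w.Nonempty :=
    fun w hw => hy.mono (mem_filter.1 hw).2
  have star_filter_subset : {w ∈ {w ∈ G | y ⊆ w} | w ⊆ x} = Icc y x := by
    ext w
    simp only [mem_filter, mem_Icc]
    exact ⟨fun ⟨⟨_, hyw⟩, hwx⟩ => ⟨hyw, hwx⟩,
      fun ⟨hyw, hwx⟩ => ⟨⟨hclosed x hx w hwx (hy.mono hyw), hyw⟩, hwx⟩⟩
  have exchange := sum_inter_nonempty_mul_sum_superset hclosed (filter_subset (y ⊆ ·) G)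
    star_nonempty x fun w => (-1 : R) ^ (#w + 1)
  rw [star_filter_subset, alternating_sum_Icc] at exchange
  simpa only [filter_filter, and_comm] using exchange

end

/-- Gauss–Bonnet form of `L g = 1`: for simplices `x ≠ y` in a finite abstract
simplicial complex, `Σ_{z ∩ x ≠ ∅} ω(z) χ(St(z) ∩ St(y)) = 0`, while
`Σ_{z ∩ x ≠ ∅} ω(z) χ(St(z) ∩ St(x)) = ω(x)`. -/
theorem green_gauss_bonnet {V : Type*} [DecidableEq V]
    (G : Finset (Finset V))
    (hne : ∀ x ∈ G, x.Nonempty)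
    (hclosed : ∀ x ∈ G, ∀ y ⊆ x, y.Nonempty → y ∈ G) :
    (∀ x ∈ G, ∀ y ∈ G, x ≠ y →
      ∑ z ∈ G.filter (fun z => (z ∩ x).Nonempty),
        (-1 : ℚ) ^ (z.card + 1) *
          ∑ w ∈ G.filter (fun w => z ⊆ w ∧ y ⊆ w), (-1 : ℚ) ^ (w.card + 1) = 0) ∧
    (∀ x ∈ G,
      ∑ z ∈ G.filter (fun z => (z ∩ x).Nonempty),
        (-1 : ℚ) ^ (z.card + 1) *
          ∑ w ∈ G.filter (fun w => z ⊆ w ∧ x ⊆ w), (-1 : ℚ) ^ (w.card + 1)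
        = (-1 : ℚ) ^ (x.card + 1)) := by
  exact ⟨fun x hx y hy hxy => (green_gauss_bonnet_general hclosed hx (hne y hy)).trans (if_neg hxy),
    fun x hx => (green_gauss_bonnet_general hclosed hx (hne x hx)).trans (if_pos rfl)⟩
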